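/- arXiv:2304.06127 — 8 statements merged into one kernel-verified Lean document; each statement's English description precedes it below -/
import Mathlib

section
/- All derivatives of y_n at τ = 0 up to order 2n−1 vanish, and the derivative of order 2n satisfies y_n^{(2n)}(0) = −∏_{j=2}^n α_j. That is, iteratedDeriv k y_n 0 = 0 for every 0 ≤ k ≤ 2n−1, and iteratedDeriv (2n) y_n 0 = −∏_{j=2}^n α_j. -/
/-- for the released non-dimensional mass–spring system, all derivatives of
`y n` at `τ = 0` up to order `2n - 1` vanish, and the derivative of order `2n` equals
`-∏_{j=2}^n α j`. -/
theorem bottom_mass_initial_derivatives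
    (n : ℕ) (hn : 2 ≤ n) (α β : ℕ → ℝ)
    (hα : ∀ j, 2 ≤ j → j ≤ n → 0 < α j)
    (hβ : ∀ j, 2 ≤ j → j ≤ n - 1 → 0 < β j)
    (y : ℕ → ℝ → ℝ)
    (hsmooth : ∀ j, 1 ≤ j → j ≤ n → ContDiff ℝ (⊤ : ℕ∞) (y j))
    (heq1 : ∀ t : ℝ, deriv (deriv (y 1)) t = (y 2 t - y 1 t) - 1)
    (heqj : ∀ j, 2 ≤ j → j ≤ n - 1 → ∀ t : ℝ,
      deriv (deriv (y j)) t = α j * (y (j - 1) t - y j t) + β j * (y (j + 1) t - y j t))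
    (heqn : ∀ t : ℝ, deriv (deriv (y n)) t = α n * (y (n - 1) t - y n t))
    (hy0 : ∀ j, 1 ≤ j → j ≤ n → y j 0 = 0)
    (hy0' : ∀ j, 1 ≤ j → j ≤ n → deriv (y j) 0 = 0) :
    (∀ k ≤ 2 * n - 1, iteratedDeriv k (y n) 0 = 0) ∧
      iteratedDeriv (2 * n) (y n) 0 = -∏ j ∈ Finset.Icc 2 n, α j := by
  have hcd : ∀ (k j : ℕ), 1 ≤ j → j ≤ n → ContDiffAt ℝ k (y j) 0 := fun k j h1 h2 =>
    ((hsmooth j h1 h2).of_le (by exact_mod_cast le_top)).contDiffAt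
  have hrec : ∀ j, 2 ≤ j → j ≤ n → ∀ k, iteratedDeriv k (y j) 0 = 0 →
      (j < n → iteratedDeriv k (y (j + 1)) 0 = 0) →
      iteratedDeriv (k + 2) (y j) 0 = α j * iteratedDeriv k (y (j - 1)) 0 := by
    intro j h2 hjn k h0 h1
    have hs : iteratedDeriv (k + 2) (y j) = iteratedDeriv k (deriv (deriv (y j))) := by
      rw [iteratedDeriv_succ', iteratedDeriv_succ']
    have ca := hcd k (j - 1) (by omega) (by omega)
    have cb := hcd k j (by omega) hjn
    have e1 : iteratedDeriv k (fun t => α j * (y (j - 1) t - y j t)) 0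
        = α j * iteratedDeriv k (y (j - 1)) 0 := by
      have := iteratedDeriv_const_mul_field (n := k) (x := (0:ℝ)) (α j)
        (fun t => y (j - 1) t - y j t)
      rw [this, iteratedDeriv_fun_sub ca cb, h0, sub_zero]
    rcases Nat.lt_or_ge j n with hlt | hge
    · have cc := hcd k (j + 1) (by omega) hlt
      have e2 : iteratedDeriv k (fun t => β j * (y (j + 1) t - y j t)) 0 = 0 := by
        have := iteratedDeriv_const_mul_field (n := k) (x := (0:ℝ)) (β j)
          (fun t => y (j + 1) t - y j t)
        rw [this, iteratedDeriv_fun_sub cc cb, h0, h1 hlt, sub_zero, mul_zero]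
      rw [hs, funext (heqj j h2 (by omega)),
        iteratedDeriv_fun_add (contDiffAt_const.mul (ca.sub cb))
          (contDiffAt_const.mul (cc.sub cb)), e1, e2, add_zero]
    · obtain rfl : j = n := le_antisymm hjn hge
      rw [hs, funext heqn, e1]
  have hvan : ∀ k j, 1 ≤ j → j ≤ n → k < 2 * j → iteratedDeriv k (y j) 0 = 0 := by
    intro k
    induction k using Nat.strong_induction_on with
    | _ k ih =>
      intro j h1 hjn hk
      match k, ih, hk with
      | 0, _, _ => simpa using hy0 j h1 hjn
      | 1, _, _ => simpa using hy0' j h1 hjn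
      | k + 2, ih, hk =>
        rw [hrec j (by omega) hjn k (ih k (by omega) j h1 hjn (by omega))
          (fun h => ih k (by omega) (j + 1) (by omega) h (by omega)),
          ih k (by omega) (j - 1) (by omega) (by omega) (by omega), mul_zero]
  have htop : ∀ j, 1 ≤ j → j ≤ n →
      iteratedDeriv (2 * j) (y j) 0 = -∏ i ∈ Finset.Icc 2 j, α i := by
    intro j h1
    induction j, h1 using Nat.le_induction with
    | base =>
      intro _
      have : iteratedDeriv (2 * 1) (y 1) = deriv (deriv (y 1)) := by
        rw [show 2 * 1 = 0 + 1 + 1 from rfl, iteratedDeriv_succ', iteratedDeriv_succ',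
          iteratedDeriv_zero]
      rw [this, heq1, hy0 1 le_rfl (by omega), hy0 2 (by omega) hn]
      simp
    | succ j hj ih =>
      intro hjn
      rw [show 2 * (j + 1) = 2 * j + 2 by ring,
        hrec (j + 1) (by omega) hjn (2 * j) (hvan _ _ (by omega) hjn (by omega))
          (fun h => hvan _ _ (by omega) h (by omega)), Nat.add_sub_cancel, ih (by omega),
        Finset.prod_Icc_succ_top (by omega)]
      ring
  exact ⟨fun k hk => hvan k n (by omega) le_rfl (by omega), htop n (by omega) le_rfl⟩
end

section
/- As τ → 0, the bottom mass position satisfies y_n(τ) ∼ −(∏_{j=2}^n α_j) τ^{2n}/(2n)!; precisely, y_n(τ) + (∏_{j=2}^n α_j) τ^{2n}/(2n)! = o(τ^{2n}) as τ → 0. -/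
open Asymptotics Filter Topology in
/-- Integrating a little-o estimate once. -/
lemma int_littleO (f f' : ℝ → ℝ) (k : ℕ) (hf : ∀ t, HasDerivAt f (f' t) t) (h0 : f 0 = 0)
    (h : f' =o[𝓝 (0 : ℝ)] fun t : ℝ => t ^ k) :
    f =o[𝓝 (0 : ℝ)] fun t : ℝ => t ^ (k + 1) := by
  rw [isLittleO_iff] at h ⊢
  intro c hc
  have h1 := h hc
  rw [Metric.eventually_nhds_iff] at h1 ⊢
  obtain ⟨ε, hε, H⟩ := h1
  refine ⟨ε, hε, fun t ht => ?_⟩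
  have key := (convex_closedBall (0 : ℝ) |t|).norm_image_sub_le_of_norm_hasDerivWithin_le
    (f := f) (f' := f') (C := c * |t| ^ k) (x := 0) (y := t)
    (fun x _ => (hf x).hasDerivWithinAt) (fun x hx => ?_) (by simp) (by simp)
  · rw [h0, sub_zero, sub_zero] at key
    rw [norm_pow, pow_succ, ← mul_assoc]
    simpa using key
  · have hx' : |x| ≤ |t| := by simpa using hx
    have ht' : |t| < ε := by simpa using ht
    have := H (y := x) (by simpa using lt_of_le_of_lt hx' ht')
    rw [norm_pow, Real.norm_eq_abs x] at this
    refine this.trans ?_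
    gcongr

open Asymptotics Filter Topology in
/-- Integrating a one-term expansion twice. -/
lemma int_twice (f : ℝ → ℝ) (k : ℕ) (c : ℝ) (hf : ContDiff ℝ (⊤ : ℕ∞) f) (h0 : f 0 = 0)
    (h0' : deriv f 0 = 0)
    (h : (fun t => deriv (deriv f) t + c * t ^ k / (Nat.factorial k))
      =o[𝓝 (0 : ℝ)] fun t : ℝ => t ^ k) :
    (fun t => f t + c * t ^ (k + 2) / (Nat.factorial (k + 2)))
      =o[𝓝 (0 : ℝ)] fun t : ℝ => t ^ (k + 2) := by
  have hmon : ∀ (m : ℕ) (t : ℝ),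
      HasDerivAt (fun t : ℝ => c * t ^ (m + 1) / (Nat.factorial (m + 1)))
        (c * t ^ m / (Nat.factorial m)) t := by
    intro m t
    have := (((hasDerivAt_pow (m + 1) t).const_mul c).div_const (Nat.factorial (m + 1) : ℝ))
    refine this.congr_deriv ?_
    have h1 : (Nat.factorial m : ℝ) ≠ 0 := by positivity
    have h2 : ((m : ℝ) + 1) ≠ 0 := by positivity
    rw [Nat.factorial_succ]
    push_cast
    field_simp
  have hd1 : ∀ t, HasDerivAt f (deriv f t) t := fun t =>
    (hf.differentiable (by simp) t).hasDerivAt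
  have hf' : ContDiff ℝ (⊤ : ℕ∞) (deriv f) := (contDiff_infty_iff_deriv.1 hf).2
  have hd2 : ∀ t, HasDerivAt (deriv f) (deriv (deriv f) t) t := fun t =>
    (hf'.differentiable (by simp) t).hasDerivAt
  have s1 := int_littleO (fun t => deriv f t + c * t ^ (k + 1) / (Nat.factorial (k + 1))) _ k
    (fun t => (hd2 t).add (hmon k t)) (by simp [h0']) h
  exact int_littleO (fun t => f t + c * t ^ (k + 2) / (Nat.factorial (k + 2))) _ (k + 1)
    (fun t => (hd1 t).add (hmon (k + 1) t)) (by simp [h0]) s1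

/-- short-time asymptotics of the bottom mass:
`y n τ + (∏ α) τ^(2n)/(2n)! = o(τ^(2n))` as `τ → 0`. -/
theorem bottom_mass_short_time_asymptotics
    (n : ℕ) (hn : 2 ≤ n) (α β : ℕ → ℝ)
    (hα : ∀ j, 2 ≤ j → j ≤ n → 0 < α j)
    (hβ : ∀ j, 2 ≤ j → j ≤ n - 1 → 0 < β j)
    (y : ℕ → ℝ → ℝ)
    (hsmooth : ∀ j, 1 ≤ j → j ≤ n → ContDiff ℝ (⊤ : ℕ∞) (y j))
    (heq1 : ∀ t : ℝ, deriv (deriv (y 1)) t = (y 2 t - y 1 t) - 1)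
    (heqj : ∀ j, 2 ≤ j → j ≤ n - 1 → ∀ t : ℝ,
      deriv (deriv (y j)) t = α j * (y (j - 1) t - y j t) + β j * (y (j + 1) t - y j t))
    (heqn : ∀ t : ℝ, deriv (deriv (y n)) t = α n * (y (n - 1) t - y n t))
    (hy0 : ∀ j, 1 ≤ j → j ≤ n → y j 0 = 0)
    (hy0' : ∀ j, 1 ≤ j → j ≤ n → deriv (y j) 0 = 0) :
    (fun τ : ℝ => y n τ + (∏ j ∈ Finset.Icc 2 n, α j) * τ ^ (2 * n) / (Nat.factorial (2 * n)))
      =o[nhds (0 : ℝ)] fun τ : ℝ => τ ^ (2 * n) := by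
  classical
  have hstep : ∀ j, 2 ≤ j → j ≤ n → ∃ b : ℝ, ∃ i, j ≤ i ∧ i ≤ n ∧ ∀ t : ℝ,
      deriv (deriv (y j)) t = α j * (y (j - 1) t - y j t) + b * (y i t - y j t) := by
    intro j h2 hj
    rcases Nat.lt_or_ge j n with h | h
    · exact ⟨β j, j + 1, by omega, by omega, heqj j h2 (by omega)⟩
    · obtain rfl : j = n := by omega
      exact ⟨0, j, le_rfl, le_rfl, fun t => by rw [heqn]; ring⟩
  have S : ∀ k j, k + 1 ≤ j → j ≤ n → (y j) =o[nhds (0 : ℝ)] fun t : ℝ => t ^ (2 * k) := by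
    intro k
    induction k with
    | zero =>
      intro j h1 h2
      simp only [mul_zero, pow_zero]
      rw [Asymptotics.isLittleO_one_iff]
      have := (hsmooth j (by omega) h2).continuous.tendsto 0
      rwa [hy0 j (by omega) h2] at this
    | succ k ih =>
      intro j h1 h2
      obtain ⟨b, i, hi1, hi2, he⟩ := hstep j (by omega) h2
      have := int_twice (y j) (2 * k) 0 (hsmooth j (by omega) h2) (hy0 j (by omega) h2)
        (hy0' j (by omega) h2) (by
          simp only [he, zero_mul, zero_div, add_zero]
          have a1 := ih (j - 1) (by omega) (by omega)
          have a2 := ih j (by omega) h2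
          have a3 := ih i (by omega) hi2
          exact ((a1.sub a2).const_mul_left _).add ((a3.sub a2).const_mul_left _))
      simpa [mul_add] using this
  have T : ∀ k, k + 1 ≤ n →
      (fun τ : ℝ => y (k + 1) τ + (∏ j ∈ Finset.Icc 2 (k + 1), α j) * τ ^ (2 * (k + 1)) /
        (Nat.factorial (2 * (k + 1)))) =o[nhds (0 : ℝ)] fun τ : ℝ => τ ^ (2 * (k + 1)) := by
    intro k
    induction k with
    | zero =>
      intro _
      have := int_twice (y 1) 0 1 (hsmooth 1 (by omega) (by omega)) (hy0 1 (by omega) (by omega))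
        (hy0' 1 (by omega) (by omega)) (by
          have a1 := S 0 1 (by omega) (by omega)
          have a2 := S 0 2 (by omega) (by omega)
          refine (a2.sub a1).congr_left fun t => ?_
          rw [heq1]
          simp)
      simpa using this
    | succ k ih =>
      intro hk
      obtain ⟨b, i, hi1, hi2, he⟩ := hstep (k + 1 + 1) (by omega) hk
      refine int_twice (y (k + 1 + 1)) (2 * (k + 1)) _ (hsmooth _ (by omega) hk)
        (hy0 _ (by omega) hk) (hy0' _ (by omega) hk) ?_
      have a1 := ih (by omega)
      have a2 := S (k + 1) (k + 1 + 1) (by omega) hk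
      have a3 := S (k + 1) i (by omega) hi2
      refine (((a1.sub a2).const_mul_left (α (k + 1 + 1))).add
        ((a3.sub a2).const_mul_left b)).congr_left fun t => ?_
      rw [he, Finset.prod_Icc_succ_top (by omega : 2 ≤ k + 1 + 1)]
      simp only [Nat.add_sub_cancel]
      ring
  obtain ⟨m, rfl⟩ : ∃ m, n = m + 1 := ⟨n - 1, by omega⟩
  exact T m le_rfl
end

section
/- For every index 1 ≤ j ≤ n, all derivatives of y_j at τ = 0 up to order 2j−1 vanish, and the derivative of order 2j satisfies y_j^{(2j)}(0) = −∏_{i=2}^{j} α_i (the empty product for j = 1 being 1, so y_1''(0) = −1). -/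
/-- for every `1 ≤ j ≤ n`, all derivatives of `y j` at `0` up to order
`2j - 1` vanish and the derivative of order `2j` equals `-∏_{i=2}^j α i`. -/
theorem each_mass_initial_derivatives
    (n : ℕ) (hn : 2 ≤ n) (α β : ℕ → ℝ)
    (hα : ∀ j, 2 ≤ j → j ≤ n → 0 < α j)
    (hβ : ∀ j, 2 ≤ j → j ≤ n - 1 → 0 < β j)
    (y : ℕ → ℝ → ℝ)
    (hsmooth : ∀ j, 1 ≤ j → j ≤ n → ContDiff ℝ (⊤ : ℕ∞) (y j))
    (heq1 : ∀ t : ℝ, deriv (deriv (y 1)) t = (y 2 t - y 1 t) - 1)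
    (heqj : ∀ j, 2 ≤ j → j ≤ n - 1 → ∀ t : ℝ,
      deriv (deriv (y j)) t = α j * (y (j - 1) t - y j t) + β j * (y (j + 1) t - y j t))
    (heqn : ∀ t : ℝ, deriv (deriv (y n)) t = α n * (y (n - 1) t - y n t))
    (hy0 : ∀ j, 1 ≤ j → j ≤ n → y j 0 = 0)
    (hy0' : ∀ j, 1 ≤ j → j ≤ n → deriv (y j) 0 = 0) :
    ∀ j, 1 ≤ j → j ≤ n →
      (∀ k ≤ 2 * j - 1, iteratedDeriv k (y j) 0 = 0) ∧
        iteratedDeriv (2 * j) (y j) 0 = -∏ i ∈ Finset.Icc 2 j, α i := by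
  have hrec : ∀ j, 2 ≤ j → j ≤ n → ∃ b : ℝ, ∃ m, j ≤ m ∧ m ≤ n ∧ ∀ k : ℕ,
      iteratedDeriv (k + 2) (y j) 0 =
        α j * (iteratedDeriv k (y (j - 1)) 0 - iteratedDeriv k (y j) 0)
          + b * (iteratedDeriv k (y m) 0 - iteratedDeriv k (y j) 0) := by
    intro j h2 hj
    have hode : ∃ b : ℝ, ∃ m, j ≤ m ∧ m ≤ n ∧ ∀ t : ℝ,
        deriv (deriv (y j)) t = α j * (y (j - 1) t - y j t) + b * (y m t - y j t) := by
      rcases Nat.lt_or_ge j n with h | h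
      · exact ⟨β j, j + 1, by omega, by omega, heqj j h2 (by omega)⟩
      · obtain rfl : j = n := by omega
        exact ⟨0, j, le_rfl, le_rfl, fun t => by rw [heqn t]; ring⟩
    obtain ⟨b, m, hjm, hmn, hb⟩ := hode
    refine ⟨b, m, hjm, hmn, fun k => ?_⟩
    have hs : ∀ i, 1 ≤ i → i ≤ n → ContDiffAt ℝ k (y i) 0 := fun i h1 h2 =>
      ((hsmooth i h1 h2).of_le (by exact_mod_cast le_top)).contDiffAt
    have s1 := hs (j - 1) (by omega) (by omega)
    have s2 := hs j (by omega) (by omega)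
    have s3 := hs m (by omega) (by omega)
    have hf : deriv (deriv (y j)) =
        (fun t => α j * (y (j - 1) - y j) t) + (fun t => b * (y m - y j) t) := by
      funext t
      simp [hb t]
    have c1 : ContDiffAt ℝ k (fun t => α j * (y (j - 1) - y j) t) 0 :=
      contDiffAt_const.mul (s1.sub s2)
    have c2 : ContDiffAt ℝ k (fun t => b * (y m - y j) t) 0 :=
      contDiffAt_const.mul (s3.sub s2)
    rw [iteratedDeriv_succ', iteratedDeriv_succ', hf, iteratedDeriv_add c1 c2,
      iteratedDeriv_const_mul_field, iteratedDeriv_const_mul_field,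
      iteratedDeriv_sub s1 s2, iteratedDeriv_sub s3 s2]
  have hA : ∀ k j, 1 ≤ j → j ≤ n → k ≤ 2 * j - 1 → iteratedDeriv k (y j) 0 = 0 := by
    intro k
    induction k using Nat.strong_induction_on with
    | _ k ih =>
      intro j h1 hj hk
      match k, ih, hk with
      | 0, _, _ => simpa using hy0 j h1 hj
      | 1, _, _ => simpa using hy0' j h1 hj
      | k + 2, ih, hk =>
        obtain ⟨b, m, hjm, hmn, h⟩ := hrec j (by omega) hj
        rw [h k, ih k (by omega) (j - 1) (by omega) (by omega) (by omega),
          ih k (by omega) j h1 hj (by omega),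
          ih k (by omega) m (by omega) hmn (by omega)]
        ring
  intro j h1 hj
  refine ⟨fun k hk => hA k j h1 hj hk, ?_⟩
  induction j, h1 using Nat.le_induction with
  | base =>
    rw [show 2 * 1 = 0 + 1 + 1 from rfl, iteratedDeriv_succ', iteratedDeriv_succ',
      iteratedDeriv_zero, heq1, hy0 1 le_rfl (by omega), hy0 2 (by omega) hn]
    simp
  | succ j h1 ih =>
    obtain ⟨b, m, hjm, hmn, h⟩ := hrec (j + 1) (by omega) hj
    rw [show 2 * (j + 1) = 2 * j + 2 by ring, h, Nat.add_sub_cancel, ih (by omega),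
      hA (2 * j) (j + 1) (by omega) hj (by omega),
      hA (2 * j) m (by omega) hmn (by omega),
      Finset.prod_Icc_succ_top (by omega)]
    ring
end

section
/- Define Q = ((∏_{j=1}^{n−1} k_j) (Σ_{j=1}^n m_j) g) / (∏_{j=1}^n m_j). Then as t → 0 the bottom mass position satisfies z_n(t) ∼ −Q t^{2n}/(2n)!; precisely, z_n(t) + Q t^{2n}/(2n)! = o(t^{2n}) as t → 0. -/
theorem aux_iter (p : ℕ) (a c : ℝ) (f u v w : ℝ → ℝ)
    (hu : ContDiff ℝ (⊤ : ℕ∞) u) (hv : ContDiff ℝ (⊤ : ℕ∞) v) (hw : ContDiff ℝ (⊤ : ℕ∞) w)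
    (h : ∀ t, deriv (deriv f) t = a * (u t - v t) + c * (w t - v t)) :
    iteratedDeriv (p + 2) f 0 = a * (iteratedDeriv p u 0 - iteratedDeriv p v 0)
      + c * (iteratedDeriv p w 0 - iteratedDeriv p v 0) := by
  have hu' : ContDiffAt ℝ p u 0 := (hu.of_le (by exact_mod_cast le_top)).contDiffAt
  have hv' : ContDiffAt ℝ p v 0 := (hv.of_le (by exact_mod_cast le_top)).contDiffAt
  have hw' : ContDiffAt ℝ p w 0 := (hw.of_le (by exact_mod_cast le_top)).contDiffAt
  rw [iteratedDeriv_succ', iteratedDeriv_succ']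
  have : deriv (deriv f) = (fun t => a * (u - v) t) + (fun t => c * (w - v) t) := by
    funext t
    simpa using h t
  have h1 : ContDiffAt ℝ p (fun t => a * (u - v) t) 0 := contDiffAt_const.mul (hu'.sub hv')
  have h2 : ContDiffAt ℝ p (fun t => c * (w - v) t) 0 := contDiffAt_const.mul (hw'.sub hv')
  rw [this, iteratedDeriv_add h1 h2]
  rw [iteratedDeriv_const_mul_field, iteratedDeriv_const_mul_field,
    iteratedDeriv_sub hu' hv', iteratedDeriv_sub hw' hv']

/-- with Q = ((∏ k_j)(Σ m_j) g)/(∏ m_j), one has z_n(t) + Q t^(2n)/(2n)! = o(t^(2n)) as t → 0. -/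
theorem dimensional_bottom_mass_short_time
    (n : ℕ) (hn : 2 ≤ n) (m k : ℕ → ℝ) (g : ℝ)
    (hm : ∀ j, 1 ≤ j → j ≤ n → 0 < m j)
    (hk : ∀ j, 1 ≤ j → j ≤ n - 1 → 0 < k j)
    (hg : 0 < g)
    (z : ℕ → ℝ → ℝ)
    (hsmooth : ∀ j, 1 ≤ j → j ≤ n → ContDiff ℝ (⊤ : ℕ∞) (z j))
    (heq1 : ∀ t : ℝ, m 1 * deriv (deriv (z 1)) t =
      k 1 * (z 2 t - z 1 t) - (∑ j ∈ Finset.Icc 1 n, m j) * g)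
    (heqj : ∀ j, 2 ≤ j → j ≤ n - 1 → ∀ t : ℝ, m j * deriv (deriv (z j)) t =
      k (j - 1) * (z (j - 1) t - z j t) + k j * (z (j + 1) t - z j t))
    (heqn : ∀ t : ℝ, m n * deriv (deriv (z n)) t = k (n - 1) * (z (n - 1) t - z n t))
    (hz0 : ∀ j, 1 ≤ j → j ≤ n → z j 0 = 0)
    (hz0' : ∀ j, 1 ≤ j → j ≤ n → deriv (z j) 0 = 0) :
    (fun t : ℝ => z n t +
      (((∏ j ∈ Finset.Icc 1 (n - 1), k j) * (∑ j ∈ Finset.Icc 1 n, m j) * g) /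
        ∏ j ∈ Finset.Icc 1 n, m j) * t ^ (2 * n) / (Nat.factorial (2 * n)))
      =o[nhds (0 : ℝ)] fun t : ℝ => t ^ (2 * n) := by
  have key : ∀ j, 2 ≤ j → j ≤ n → ∃ c : ℝ, ∃ q, j ≤ q ∧ q ≤ n ∧ ∀ t : ℝ,
      deriv (deriv (z j)) t =
        (k (j - 1) / m j) * (z (j - 1) t - z j t) + c * (z q t - z j t) := by
    intro j h2 hjn
    have hmj : m j ≠ 0 := (hm j (by omega) hjn).ne'
    rcases Nat.lt_or_ge j n with h | h
    · refine ⟨k j / m j, j + 1, by omega, by omega, fun t => ?_⟩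
      have := heqj j h2 (by omega) t
      field_simp
      linarith
    · obtain rfl : j = n := by omega
      refine ⟨0, j, le_rfl, le_rfl, fun t => ?_⟩
      have := heqn t
      field_simp
      linarith
  have key2 : ∀ j, 2 ≤ j → j ≤ n → ∃ c : ℝ, ∃ q, j ≤ q ∧ q ≤ n ∧ ∀ p : ℕ,
      iteratedDeriv (p + 2) (z j) 0 =
        (k (j - 1) / m j) * (iteratedDeriv p (z (j - 1)) 0 - iteratedDeriv p (z j) 0)
        + c * (iteratedDeriv p (z q) 0 - iteratedDeriv p (z j) 0) := by
    intro j h2 hjn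
    obtain ⟨c, q, h1, h3, h4⟩ := key j h2 hjn
    exact ⟨c, q, h1, h3, fun p => aux_iter p _ c _ _ _ _ (hsmooth _ (by omega) (by omega))
      (hsmooth _ (by omega) (by omega)) (hsmooth _ (by omega) (by omega)) h4⟩
  have van : ∀ p j, 1 ≤ j → j ≤ n → p < 2 * j → iteratedDeriv p (z j) 0 = 0 := by
    intro p
    induction p using Nat.strong_induction_on with
    | _ p ih =>
      intro j h1 hjn hp
      match p, ih, hp with
      | 0, _, _ => simpa using hz0 j h1 hjn
      | 1, _, _ => simpa [iteratedDeriv_one] using hz0' j h1 hjn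
      | p + 2, ih, hp =>
        obtain ⟨c, q, hq1, hq2, h⟩ := key2 j (by omega) hjn
        rw [h p, ih p (by omega) (j - 1) (by omega) (by omega) (by omega),
          ih p (by omega) j (by omega) (by omega) (by omega),
          ih p (by omega) q (by omega) (by omega) (by omega)]
        ring
  have lead : ∀ j, j + 1 ≤ n → iteratedDeriv (2 * (j + 1)) (z (j + 1)) 0 =
      -(((∏ i ∈ Finset.Icc 1 j, k i) * (∑ i ∈ Finset.Icc 1 n, m i) * g) /
        ∏ i ∈ Finset.Icc 1 (j + 1), m i) := by
    intro j
    induction j with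
    | zero =>
      intro _
      have hm1 : m 1 ≠ 0 := (hm 1 le_rfl (by omega)).ne'
      have h := heq1 0
      rw [hz0 1 le_rfl (by omega), hz0 2 (by omega) hn] at h
      simp only [zero_add, mul_one, iteratedDeriv_succ, iteratedDeriv_zero]
      simp
      field_simp
      linarith
    | succ j ih =>
      intro hj
      have hmj : m (j + 1 + 1) ≠ 0 := (hm _ (by omega) hj).ne'
      obtain ⟨c, q, hq1, hq2, h⟩ := key2 (j + 1 + 1) (by omega) hj
      have h' := h (2 * (j + 1))
      rw [van (2 * (j + 1)) (j + 1 + 1) (by omega) hj (by omega), van (2 * (j + 1)) q (by omega) hq2 (by omega),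
        Nat.add_sub_cancel, ih (by omega)] at h'
      rw [show 2 * (j + 1 + 1) = 2 * (j + 1) + 2 by ring, h',
        Finset.prod_Icc_succ_top (by omega : 1 ≤ j + 1) k,
        Finset.prod_Icc_succ_top (by omega : 1 ≤ j + 1 + 1) m]
      have hP : ∏ i ∈ Finset.Icc 1 (j + 1), m i ≠ 0 := by
        refine Finset.prod_ne_zero_iff.2 fun i hi => ?_
        rw [Finset.mem_Icc] at hi
        exact (hm i hi.1 (by omega)).ne'
      field_simp
      ring
  have hc : ∀ N : ℕ, ContDiff ℝ N (z n) := fun N =>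
    (hsmooth n (by omega) le_rfl).of_le (by exact_mod_cast le_top)
  have hT := taylor_isLittleO_univ (x₀ := (0 : ℝ)) (n := 2 * n) (hc (2 * n))
  simp only [sub_zero] at hT
  refine hT.congr_left fun t => ?_
  have hl := lead (n - 1) (by omega)
  rw [Nat.sub_add_cancel (by omega : 1 ≤ n)] at hl
  rw [taylor_within_apply, Finset.sum_range_succ, Finset.sum_eq_zero]
  · rw [iteratedDerivWithin_univ, hl]
    simp only [sub_zero, smul_eq_mul]
    ring
  · intro i hi
    rw [iteratedDerivWithin_univ, van i n (by omega) le_rfl (Finset.mem_range.1 hi), smul_zero]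
end

section
/- For every 1 ≤ j ≤ n define Q_j = ((∏_{i=1}^{j−1} k_i) (Σ_{i=1}^n m_i) g) / (∏_{i=1}^{j} m_i). Then all derivatives of z_j at t = 0 up to order 2j−1 vanish, and z_j^{(2j)}(0) = −Q_j; consequently z_j(t) + Q_j t^{2j}/(2j)! = o(t^{2j}) as t → 0. -/
theorem aux_rec (f h p : ℝ → ℝ) (hf : ContDiff ℝ (⊤ : ℕ∞) f) (hh : ContDiff ℝ (⊤ : ℕ∞) h)
    (hp : ContDiff ℝ (⊤ : ℕ∞) p) (m A B c : ℝ)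
    (he : ∀ t, m * deriv (deriv h) t = A * (f t - h t) + B * (p t - h t) + c) (l : ℕ) :
    m * iteratedDeriv (l + 2) h 0 =
      A * (iteratedDeriv l f 0 - iteratedDeriv l h 0) +
      B * (iteratedDeriv l p 0 - iteratedDeriv l h 0) + (if l = 0 then c else 0) := by
  have hf' : ContDiff ℝ l f := hf.of_le (by exact_mod_cast le_top)
  have hh' : ContDiff ℝ l h := hh.of_le (by exact_mod_cast le_top)
  have hp' : ContDiff ℝ l p := hp.of_le (by exact_mod_cast le_top)
  have h1 : (fun t => m * deriv (deriv h) t) =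
      ((fun t => A * (f - h) t) + (fun t => B * (p - h) t)) + (fun _ => c) := by
    funext t; simp [he t]
  have h2 := congrArg (fun F => iteratedDeriv l F 0) h1
  have c1 : ContDiff ℝ l (fun t => A * (f - h) t) := contDiff_const.mul (hf'.sub hh')
  have c2 : ContDiff ℝ l (fun t => B * (p - h) t) := contDiff_const.mul (hp'.sub hh')
  have c3 : ContDiff ℝ l ((fun t => A * (f - h) t) + (fun t => B * (p - h) t)) := c1.add c2
  rw [iteratedDeriv_add c3.contDiffAt contDiff_const.contDiffAt,
    iteratedDeriv_add c1.contDiffAt c2.contDiffAt, iteratedDeriv_const_mul_field,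
    iteratedDeriv_const_mul_field, iteratedDeriv_const_mul_field,
    iteratedDeriv_sub hf'.contDiffAt hh'.contDiffAt,
    iteratedDeriv_sub hp'.contDiffAt hh'.contDiffAt, iteratedDeriv_const] at h2
  rw [iteratedDeriv_succ', iteratedDeriv_succ']
  exact h2

theorem aux_taylor (f : ℝ → ℝ) (hf : ContDiff ℝ (⊤ : ℕ∞) f) (N : ℕ) (Q : ℝ)
    (h0 : ∀ l < N, iteratedDeriv l f 0 = 0) (hN : iteratedDeriv N f 0 = -Q) :
    (fun t : ℝ => f t + Q * t ^ N / (Nat.factorial N)) =o[nhds (0 : ℝ)] fun t : ℝ => t ^ N := by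
  have hf' : ContDiff ℝ N f := hf.of_le (by exact_mod_cast le_top)
  have h := taylor_isLittleO_univ (x₀ := 0) hf'
  simp only [taylor_within_apply, sub_zero, iteratedDerivWithin_univ] at h
  refine h.congr_left fun t => ?_
  rw [Finset.sum_range_succ, Finset.sum_eq_zero, hN]
  · simp only [smul_eq_mul]; ring
  · intro l hl
    rw [h0 l (Finset.mem_range.1 hl), smul_zero]

/-- for each 1 ≤ j ≤ n, with Q_j = ((∏_{i<j} k_i)(Σ m_i) g)/(∏_{i≤j} m_i), the derivatives of z_j at 0 up to order 2j-1 vanish, z_j^{(2j)}(0) = -Q_j, and z_j(t) + Q_j t^(2j)/(2j)! = o(t^(2j)) as t → 0. -/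
theorem dimensional_each_mass_short_time
    (n : ℕ) (hn : 2 ≤ n) (m k : ℕ → ℝ) (g : ℝ)
    (hm : ∀ j, 1 ≤ j → j ≤ n → 0 < m j)
    (hk : ∀ j, 1 ≤ j → j ≤ n - 1 → 0 < k j)
    (hg : 0 < g)
    (z : ℕ → ℝ → ℝ)
    (hsmooth : ∀ j, 1 ≤ j → j ≤ n → ContDiff ℝ (⊤ : ℕ∞) (z j))
    (heq1 : ∀ t : ℝ, m 1 * deriv (deriv (z 1)) t =
      k 1 * (z 2 t - z 1 t) - (∑ j ∈ Finset.Icc 1 n, m j) * g)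
    (heqj : ∀ j, 2 ≤ j → j ≤ n - 1 → ∀ t : ℝ, m j * deriv (deriv (z j)) t =
      k (j - 1) * (z (j - 1) t - z j t) + k j * (z (j + 1) t - z j t))
    (heqn : ∀ t : ℝ, m n * deriv (deriv (z n)) t = k (n - 1) * (z (n - 1) t - z n t))
    (hz0 : ∀ j, 1 ≤ j → j ≤ n → z j 0 = 0)
    (hz0' : ∀ j, 1 ≤ j → j ≤ n → deriv (z j) 0 = 0) :
    ∀ j, 1 ≤ j → j ≤ n →
      (∀ l ≤ 2 * j - 1, iteratedDeriv l (z j) 0 = 0) ∧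
      iteratedDeriv (2 * j) (z j) 0 =
        -(((∏ i ∈ Finset.Icc 1 (j - 1), k i) * (∑ i ∈ Finset.Icc 1 n, m i) * g) /
          ∏ i ∈ Finset.Icc 1 j, m i) ∧
      (fun t : ℝ => z j t +
        (((∏ i ∈ Finset.Icc 1 (j - 1), k i) * (∑ i ∈ Finset.Icc 1 n, m i) * g) /
          ∏ i ∈ Finset.Icc 1 j, m i) * t ^ (2 * j) / (Nat.factorial (2 * j)))
        =o[nhds (0 : ℝ)] fun t : ℝ => t ^ (2 * j) := by
  have hrec1 := aux_rec (z 1) (z 1) (z 2) (hsmooth 1 le_rfl (by omega)) (hsmooth 1 le_rfl (by omega))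
    (hsmooth 2 (by omega) hn) (m 1) 0 (k 1) (-((∑ j ∈ Finset.Icc 1 n, m j) * g))
    (fun t => by rw [heq1 t]; ring)
  have hrec : ∀ j, 2 ≤ j → j ≤ n → ∃ B : ℝ, ∃ p, 1 ≤ p ∧ j ≤ p ∧ p ≤ n ∧ ∀ l,
      m j * iteratedDeriv (l + 2) (z j) 0 =
        k (j - 1) * (iteratedDeriv l (z (j - 1)) 0 - iteratedDeriv l (z j) 0) +
        B * (iteratedDeriv l (z p) 0 - iteratedDeriv l (z j) 0) := by
    intro j h2 hjn
    have s1 := hsmooth (j - 1) (by omega) (by omega)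
    have s2 := hsmooth j (by omega) hjn
    by_cases h : j = n
    · refine ⟨0, j, by omega, le_rfl, hjn, fun l => ?_⟩
      have := aux_rec (z (j - 1)) (z j) (z j) s1 s2 s2 (m j) (k (j - 1)) 0 0
        (fun t => by subst h; rw [heqn t]; ring) l
      simpa using this
    · refine ⟨k j, j + 1, by omega, by omega, by omega, fun l => ?_⟩
      have := aux_rec (z (j - 1)) (z j) (z (j + 1)) s1 s2 (hsmooth (j + 1) (by omega) (by omega))
        (m j) (k (j - 1)) (k j) 0
        (fun t => by rw [heqj j h2 (by omega) t]; ring) l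
      simpa using this
  have hvan : ∀ l j, 1 ≤ j → j ≤ n → l ≤ 2 * j - 1 → iteratedDeriv l (z j) 0 = 0 := by
    intro l
    induction l using Nat.strong_induction_on with
    | _ l ih =>
      intro j h1 hjn hl
      match l, ih, hl with
      | 0, _, _ => simpa using hz0 j h1 hjn
      | 1, _, _ => simpa using hz0' j h1 hjn
      | l + 2, ih, hl =>
        obtain ⟨B, p, hp1, hjp, hpn, hr⟩ := hrec j (by omega) hjn
        have h := hr l
        rw [ih l (by omega) (j - 1) (by omega) (by omega) (by omega),
          ih l (by omega) j (by omega) (by omega) (by omega),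
          ih l (by omega) p (by omega) (by omega) (by omega)] at h
        have hmj := (hm j h1 hjn).ne'
        simpa [hmj] using h
  have hval : ∀ j, 1 ≤ j → j ≤ n → iteratedDeriv (2 * j) (z j) 0 =
        -(((∏ i ∈ Finset.Icc 1 (j - 1), k i) * (∑ i ∈ Finset.Icc 1 n, m i) * g) /
          ∏ i ∈ Finset.Icc 1 j, m i) := by
    intro j h1
    induction j, h1 using Nat.le_induction with
    | base =>
      intro hjn
      have hm1 := (hm 1 le_rfl hjn).ne'
      have h := hrec1 0
      rw [hvan 0 1 le_rfl hjn (by omega), hvan 0 2 (by omega) hn (by omega)] at h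
      simp at h ⊢
      field_simp
      linarith
    | succ j h1 ih =>
      intro hjn
      obtain ⟨B, p, hp1, hjp, hpn, hr⟩ := hrec (j + 1) (by omega) hjn
      have h := hr (2 * j)
      rw [hvan (2 * j) (j + 1) (by omega) (by omega) (by omega),
        hvan (2 * j) p (by omega) (by omega) (by omega), Nat.add_sub_cancel, ih (by omega)] at h
      have hmj := (hm (j + 1) (by omega) hjn).ne'
      have hP : ∏ i ∈ Finset.Icc 1 j, m i ≠ 0 := Finset.prod_ne_zero_iff.2 fun i hi => by
        rw [Finset.mem_Icc] at hi
        exact (hm i hi.1 (by omega)).ne'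
      obtain ⟨i, rfl⟩ : ∃ i, j = i + 1 := ⟨j - 1, by omega⟩
      rw [Finset.prod_Icc_succ_top (by omega) m, Nat.add_sub_cancel,
        Finset.prod_Icc_succ_top (by omega) k]
      rw [Nat.add_sub_cancel] at h
      apply mul_left_cancel₀ hmj
      refine Eq.trans h ?_
      field_simp
      ring
  intro j h1 hjn
  exact ⟨fun l hl => hvan l j h1 hjn hl, hval j h1 hjn,
    aux_taylor (z j) (hsmooth j h1 hjn) (2 * j) _
      (fun l hl => hvan l j h1 hjn (by omega)) (hval j h1 hjn)⟩
end

section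
/- At long time the bottom mass falls with the acceleration of gravity and the corrections are subdominant: z_n(t)/t² tends to −g/2 as t → +∞. -/
lemma aux_parts (p S : ℕ → ℝ) (N : ℕ) :
    ∑ i ∈ Finset.range (N + 1), p i * (S (i + 1) - S i)
      + ∑ i ∈ Finset.range N, S (i + 1) * (p (i + 1) - p i) = p N * S (N + 1) - p 0 * S 0 := by
  induction N with
  | zero => simp; ring
  | succ N ih =>
    rw [Finset.sum_range_succ (fun i => p i * (S (i + 1) - S i)) (N + 1),
      Finset.sum_range_succ (fun i => S (i + 1) * (p (i + 1) - p i)) N]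
    linarith

lemma aux_const (f : ℝ → ℝ) (h : ∀ t, HasDerivAt f 0 t) (t : ℝ) : f t = f 0 :=
  is_const_of_deriv_eq_zero (fun t => (h t).differentiableAt) (fun t => (h t).deriv) t 0

lemma aux_bdd (N : ℕ) (mu kap c : ℕ → ℝ) (x v a S : ℕ → ℝ → ℝ)
    (hmu : ∀ i, i ≤ N → 0 < mu i) (hkap : ∀ i, i < N → 0 < kap i)
    (hx : ∀ i, i ≤ N → ∀ t, HasDerivAt (x i) (v i t) t)
    (hv : ∀ i, i ≤ N → ∀ t, HasDerivAt (v i) (a i t) t)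
    (hS0 : ∀ t, S 0 t = 0) (hSN : ∀ t, S (N + 1) t = 0)
    (ha : ∀ i, i ≤ N → ∀ t, mu i * a i t = S (i + 1) t - S i t)
    (hS : ∀ i, i < N → ∀ t, S (i + 1) t = kap i * (x (i + 1) t - x i t) - c i)
    (hx0 : ∀ i, i ≤ N → x i 0 = 0) (hv0 : ∀ i, i ≤ N → v i 0 = 0) :
    ∃ B, ∀ t, |x N t| ≤ B := by
  -- momentum
  have hP : ∀ t, ∑ i ∈ Finset.range (N + 1), mu i * v i t = 0 := by
    intro t
    have := aux_const (fun t => ∑ i ∈ Finset.range (N + 1), mu i * v i t) (fun t => by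
      have h : HasDerivAt (fun t => ∑ i ∈ Finset.range (N + 1), mu i * v i t)
          (∑ i ∈ Finset.range (N + 1), mu i * a i t) t :=
        HasDerivAt.fun_sum fun i hi =>
          (hv i (by have := Finset.mem_range.1 hi; omega) t).const_mul (mu i)
      convert h using 1
      rw [Finset.sum_congr rfl (fun i hi =>
        ha i (by have := Finset.mem_range.1 hi; omega) t)]
      rw [Finset.sum_range_sub (fun i => S i t), hS0, hSN, sub_zero]) t
    rw [this]
    refine Finset.sum_eq_zero fun i hi => ?_
    rw [hv0 i (by have := Finset.mem_range.1 hi; omega), mul_zero]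
  have hX : ∀ t, ∑ i ∈ Finset.range (N + 1), mu i * x i t = 0 := by
    intro t
    have := aux_const (fun t => ∑ i ∈ Finset.range (N + 1), mu i * x i t) (fun t => by
      have h : HasDerivAt (fun t => ∑ i ∈ Finset.range (N + 1), mu i * x i t)
          (∑ i ∈ Finset.range (N + 1), mu i * v i t) t :=
        HasDerivAt.fun_sum fun i hi =>
          (hx i (by have := Finset.mem_range.1 hi; omega) t).const_mul (mu i)
      rwa [hP] at h) t
    rw [this]
    refine Finset.sum_eq_zero fun i hi => ?_
    rw [hx0 i (by have := Finset.mem_range.1 hi; omega), mul_zero]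
  -- energy
  let E : ℝ → ℝ := fun t => ∑ i ∈ Finset.range (N + 1), mu i / 2 * (v i t) ^ 2
    + ∑ i ∈ Finset.range N, 1 / (2 * kap i) * (S (i + 1) t) ^ 2
  have hE : ∀ t, E t = E 0 := by
    refine aux_const E fun t => ?_
    have h : HasDerivAt E (∑ i ∈ Finset.range (N + 1), mu i / 2 * (2 * v i t ^ 1 * a i t)
        + ∑ i ∈ Finset.range N,
          1 / (2 * kap i) * (2 * S (i + 1) t ^ 1 * (kap i * (v (i + 1) t - v i t)))) t := by
      refine HasDerivAt.add (HasDerivAt.fun_sum fun i hi => ?_)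
        (HasDerivAt.fun_sum fun i hi => ?_)
      · have := Finset.mem_range.1 hi
        exact_mod_cast ((hv i (by omega) t).pow 2).const_mul (mu i / 2)
      · have hi := Finset.mem_range.1 hi
        have h1 : HasDerivAt (S (i + 1)) (kap i * (v (i + 1) t - v i t)) t := by
          have : S (i + 1) = fun t => kap i * (x (i + 1) t - x i t) - c i :=
            funext (hS i hi)
          rw [this]
          exact (((hx (i + 1) (by omega) t).sub (hx i (by omega) t)).const_mul (kap i)).sub_const _
        exact_mod_cast (h1.pow 2).const_mul (1 / (2 * kap i))
    convert h using 1
    have h2 := aux_parts (fun i => v i t) (fun i => S i t) N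
    simp only [hS0, hSN, mul_zero, sub_zero] at h2
    rw [← h2]
    congr 1
    · refine Finset.sum_congr rfl fun i hi => ?_
      rw [← ha i (by have := Finset.mem_range.1 hi; omega) t]
      ring
    · refine Finset.sum_congr rfl fun i hi => ?_
      have := (hkap i (Finset.mem_range.1 hi)).ne'
      field_simp
  have hSb : ∀ i, i < N → ∀ t, |S (i + 1) t| ≤ Real.sqrt (2 * kap i * E 0) := by
    intro i hi t
    apply Real.abs_le_sqrt
    have hk := hkap i hi
    have h1 : 1 / (2 * kap i) * (S (i + 1) t) ^ 2 ≤ E 0 := by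
      rw [← hE t]
      have h3 : 0 ≤ ∑ i ∈ Finset.range (N + 1), mu i / 2 * (v i t) ^ 2 :=
        Finset.sum_nonneg fun j hj => by
          have := hmu j (by have := Finset.mem_range.1 hj; omega)
          positivity
      have h4 := Finset.single_le_sum (s := Finset.range N)
        (f := fun i => 1 / (2 * kap i) * (S (i + 1) t) ^ 2)
        (fun j hj => by
          have := hkap j (Finset.mem_range.1 hj)
          positivity) (Finset.mem_range.2 hi)
      simp only [E]
      linarith
    calc S (i + 1) t ^ 2 = 2 * kap i * (1 / (2 * kap i) * (S (i + 1) t) ^ 2) := by field_simp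
      _ ≤ _ := by gcongr
  have hd : ∀ i, i ≤ N → ∃ B, ∀ t, |x i t - x 0 t| ≤ B := by
    intro i
    induction i with
    | zero => intro _; exact ⟨0, fun t => by simp⟩
    | succ i ih =>
      intro hi
      obtain ⟨B, hB⟩ := ih (by omega)
      refine ⟨B + (Real.sqrt (2 * kap i * E 0) + |c i|) / kap i, fun t => ?_⟩
      have hk := hkap i (by omega)
      have h1 : x (i + 1) t - x i t = (S (i + 1) t + c i) / kap i := by
        rw [hS i (by omega) t]; field_simp; ring
      have h2 : |x (i + 1) t - x i t| ≤ (Real.sqrt (2 * kap i * E 0) + |c i|) / kap i := by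
        rw [h1, abs_div, abs_of_pos hk]
        gcongr
        exact (abs_add_le _ _).trans (by gcongr; exact hSb i (by omega) t)
      calc |x (i + 1) t - x 0 t| = |(x i t - x 0 t) + (x (i + 1) t - x i t)| := by
            congr 1; ring
        _ ≤ _ := (abs_add_le _ _).trans (add_le_add (hB t) h2)
  choose! B hB using hd
  set M := ∑ i ∈ Finset.range (N + 1), mu i with hM
  have hMpos : 0 < M := Finset.sum_pos
    (fun i hi => hmu i (by have := Finset.mem_range.1 hi; omega)) ⟨0, by simp⟩
  refine ⟨(∑ i ∈ Finset.range (N + 1), mu i * (B N + B i)) / M, fun t => ?_⟩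
  have h1 : x N t = (∑ i ∈ Finset.range (N + 1),
      mu i * ((x N t - x 0 t) - (x i t - x 0 t))) / M := by
    rw [eq_div_iff hMpos.ne']
    have : ∀ i, mu i * ((x N t - x 0 t) - (x i t - x 0 t)) = mu i * x N t - mu i * x i t := by
      intro i; ring
    simp only [this, Finset.sum_sub_distrib, hX t, ← Finset.sum_mul, ← hM]
    ring
  rw [h1, abs_div, abs_of_pos hMpos]
  gcongr
  refine (Finset.abs_sum_le_sum_abs _ _).trans (Finset.sum_le_sum fun i hi => ?_)
  have hi : i ≤ N := by have := Finset.mem_range.1 hi; omega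
  have := hmu i hi
  rw [abs_mul, abs_of_pos this]
  gcongr
  exact (abs_sub _ _).trans (add_le_add (hB N le_rfl t) (hB i hi t))

/-- at long time the bottom mass falls with acceleration g: z_n(t)/t² → -g/2 as t → +∞. -/
theorem bottom_mass_long_time_free_fall
    (n : ℕ) (hn : 2 ≤ n) (m k : ℕ → ℝ) (g : ℝ)
    (hm : ∀ j, 1 ≤ j → j ≤ n → 0 < m j)
    (hk : ∀ j, 1 ≤ j → j ≤ n - 1 → 0 < k j)
    (hg : 0 < g)
    (z : ℕ → ℝ → ℝ)
    (hsmooth : ∀ j, 1 ≤ j → j ≤ n → ContDiff ℝ (⊤ : ℕ∞) (z j))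
    (heq1 : ∀ t : ℝ, m 1 * deriv (deriv (z 1)) t =
      k 1 * (z 2 t - z 1 t) - (∑ j ∈ Finset.Icc 1 n, m j) * g)
    (heqj : ∀ j, 2 ≤ j → j ≤ n - 1 → ∀ t : ℝ, m j * deriv (deriv (z j)) t =
      k (j - 1) * (z (j - 1) t - z j t) + k j * (z (j + 1) t - z j t))
    (heqn : ∀ t : ℝ, m n * deriv (deriv (z n)) t = k (n - 1) * (z (n - 1) t - z n t))
    (hz0 : ∀ j, 1 ≤ j → j ≤ n → z j 0 = 0)
    (hz0' : ∀ j, 1 ≤ j → j ≤ n → deriv (z j) 0 = 0) :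
    Filter.Tendsto (fun t : ℝ => z n t / t ^ 2) Filter.atTop (nhds (-g / 2)) := by
  obtain ⟨N, rfl⟩ : ∃ N, n = N + 1 := ⟨n - 1, by omega⟩
  simp only [Nat.add_sub_cancel] at *
  have hIoc : ∀ j, j ≤ N → ∑ i ∈ Finset.Ioc j (N + 1), m i
      = m (j + 1) + ∑ i ∈ Finset.Ioc (j + 1) (N + 1), m i := by
    intro j hj
    have h : Finset.Ioc j (N + 1) = insert (j + 1) (Finset.Ioc (j + 1) (N + 1)) := by
      ext i; simp only [Finset.mem_Ioc, Finset.mem_insert]; omega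
    rw [h, Finset.sum_insert (by simp)]
  have hIcc : ∑ i ∈ Finset.Icc 1 (N + 1), m i = ∑ i ∈ Finset.Ioc 0 (N + 1), m i := by
    congr 1
  rw [hIcc, hIoc 0 (by omega)] at heq1
  have hd1 : ∀ j, 1 ≤ j → j ≤ N + 1 → ∀ t, HasDerivAt (z j) (deriv (z j) t) t := fun j h1 h2 t =>
    ((hsmooth j h1 h2).differentiable (by simp) t).hasDerivAt
  have hd2 : ∀ j, 1 ≤ j → j ≤ N + 1 → ∀ t,
      HasDerivAt (deriv (z j)) (deriv (deriv (z j)) t) t := fun j h1 h2 t => by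
    have h : ContDiff ℝ 1 (deriv (z j)) := by
      have h3 : ContDiff ℝ (1 + 1) (z j) := (hsmooth j h1 h2).of_le (by
        have h4 : (((2 : ℕ∞)) : WithTop ℕ∞) ≤ ((⊤ : ℕ∞) : WithTop ℕ∞) :=
          WithTop.coe_le_coe.2 le_top
        norm_num
        exact h4)
      exact ((contDiff_succ_iff_deriv).1 h3).2.2
    exact (h.differentiable (by simp) t).hasDerivAt
  let c : ℕ → ℝ := fun i => g * ∑ i ∈ Finset.Ioc (i + 1) (N + 1), m i
  let S : ℕ → ℝ → ℝ := fun i t =>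
    if i = 0 ∨ i = N + 1 then 0 else k i * (z (i + 1) t - z i t)
      - g * ∑ l ∈ Finset.Ioc i (N + 1), m l
  obtain ⟨B, hB⟩ := aux_bdd N (fun i => m (i + 1)) (fun i => k (i + 1)) c
    (fun i t => z (i + 1) t + g / 2 * t ^ 2) (fun i t => deriv (z (i + 1)) t + g * t)
    (fun i t => deriv (deriv (z (i + 1))) t + g) S
    (fun i hi => hm _ (by omega) (by omega)) (fun i hi => hk _ (by omega) (by omega))
    (fun i hi t => by
      have h := (hd1 (i + 1) (by omega) (by omega) t).add
        ((hasDerivAt_pow 2 t).const_mul (g / 2))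
      have e : deriv (z (i + 1)) t + g * t
          = deriv (z (i + 1)) t + g / 2 * (((2 : ℕ) : ℝ) * t ^ (2 - 1)) := by
        norm_num; ring
      simp only [e]
      exact h)
    (fun i hi t => by
      have h := (hd2 (i + 1) (by omega) (by omega) t).add
        ((hasDerivAt_id t).const_mul g)
      rw [mul_one] at h
      exact h)
    (fun t => by simp [S]) (fun t => by simp [S])
    (fun i hi t => by
      have hI := hIoc i hi
      rw [mul_add]
      rcases Nat.eq_zero_or_pos i with rfl | hi0
      · have hN : ¬ (N = 0) := by omega
        simp only [S, zero_add, heq1 t]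
        simp [hN]
        ring
      · rcases Nat.lt_or_ge i N with hlt | hge
        · have e := heqj (i + 1) (by omega) (by omega) t
          simp only [Nat.add_sub_cancel] at e
          have h1 : ¬ (i + 1 = 0 ∨ i + 1 = N + 1) := by omega
          have h2 : ¬ (i = 0 ∨ i = N + 1) := by omega
          simp only [S, if_neg h1, if_neg h2, e, hI]
          ring
        · obtain rfl : i = N := by omega
          have h2 : ¬ (i = 0 ∨ i = i + 1) := by omega
          simp only [S, if_neg h2, heqn t, hI]
          simp
          ring)
    (fun i hi t => by
      have h1 : ¬ (i + 1 = 0 ∨ i + 1 = N + 1) := by omega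
      simp only [S, if_neg h1, c]
      ring)
    (fun i hi => by simp [hz0 (i + 1) (by omega) (by omega)])
    (fun i hi => by simp [hz0' (i + 1) (by omega) (by omega)])
  have hlim : Filter.Tendsto (fun t : ℝ => (z (N + 1) t + g / 2 * t ^ 2) / t ^ 2)
      Filter.atTop (nhds 0) := by
    have h0 : Filter.Tendsto (fun t : ℝ => B / t ^ 2) Filter.atTop (nhds 0) :=
      Filter.Tendsto.div_atTop tendsto_const_nhds (Filter.tendsto_pow_atTop (by norm_num))
    refine squeeze_zero_norm (fun t => ?_) h0
    rw [Real.norm_eq_abs, abs_div, abs_of_nonneg (sq_nonneg t)]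
    exact div_le_div_of_nonneg_right (hB t) (sq_nonneg t)
  have h2 := hlim.add_const (-g / 2)
  rw [zero_add] at h2
  refine h2.congr' ?_
  filter_upwards [Filter.eventually_gt_atTop 0] with t ht
  field_simp
  ring
end

section
/- Suppose additionally that the constants come from a mass–spring system: α_j = (m_1/m_j)(k_{j−1}/k_1) for 2 ≤ j ≤ n and β_j = (m_1/m_j)(k_j/k_1) for 2 ≤ j ≤ n−1, with all m_j > 0 and k_j > 0. Then the coefficient a_2 of s² in the polynomial det A(s) equals ((∏_{j=2}^n α_j)/m_1) · Σ_{j=1}^n m_j. -/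
/-- The `n × n` tridiagonal matrix `A(s)` of the released mass–spring system with the
variable `s` regarded as a polynomial indeterminate over `ℝ`; row/column `i : Fin n`
corresponds to the 1-based index `i + 1`. -/
noncomputable def springMatrixPoly (n : ℕ) (α β : ℕ → ℝ) :
    Matrix (Fin n) (Fin n) (Polynomial ℝ) :=
  Matrix.of fun i j =>
    if (i : ℕ) = 0 then
      (if (j : ℕ) = 0 then Polynomial.X ^ 2 + 1
       else if (j : ℕ) = 1 then -1 else 0)
    else if (i : ℕ) = n - 1 then
      (if (j : ℕ) = n - 2 then Polynomial.C (-α n)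
       else if (j : ℕ) = n - 1 then Polynomial.X ^ 2 + Polynomial.C (α n) else 0)
    else
      (if (j : ℕ) = (i : ℕ) - 1 then Polynomial.C (-α ((i : ℕ) + 1))
       else if (j : ℕ) = (i : ℕ) then
         Polynomial.X ^ 2 + Polynomial.C (α ((i : ℕ) + 1) + β ((i : ℕ) + 1))
       else if (j : ℕ) = (i : ℕ) + 1 then Polynomial.C (-β ((i : ℕ) + 1))
       else 0)

theorem spring_sum_Icc_one (f : ℕ → ℝ) (n : ℕ) :
    ∑ j ∈ Finset.Icc 1 n, f j = ∑ i ∈ Finset.range n, f (i + 1) := by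
  induction n with
  | zero => simp
  | succ n ih => rw [Finset.sum_Icc_succ_top (by omega), ih, Finset.sum_range_succ]

theorem spring_prod_Icc_two (f : ℕ → ℝ) (n : ℕ) :
    ∏ j ∈ Finset.Icc 2 (n + 1), f j = ∏ i ∈ Finset.range n, f (i + 2) := by
  induction n with
  | zero => simp
  | succ n ih => rw [Finset.prod_Icc_succ_top (by omega), ih, Finset.prod_range_succ]

theorem spring_tail_sum (h : ℕ → ℝ) (c N : ℕ) (hc : c ≤ N) :
    ∑ x ∈ Finset.range N, (if c ≤ x then h x - h (x + 1) else 0) = h c - h N := by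
  induction N, hc using Nat.le_induction with
  | base =>
    rw [Finset.sum_eq_zero, sub_self]
    intro x hx
    rw [if_neg]
    simpa using hx
  | succ N hN ih =>
    rw [Finset.sum_range_succ, ih, if_pos hN]
    ring

/-- The matrix at `s = 0`, indexed by naturals. -/
noncomputable def springL (n : ℕ) (α β : ℕ → ℝ) (i j : ℕ) : ℝ :=
    if i = 0 then (if j = 0 then 1 else if j = 1 then -1 else 0)
    else if i = n - 1 then
      (if j = n - 2 then -α n else if j = n - 1 then α n else 0)
    else
      (if j = i - 1 then -α (i + 1)
       else if j = i then α (i + 1) + β (i + 1)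
       else if j = i + 1 then -β (i + 1)
       else 0)

theorem springMatrixPoly_apply (n : ℕ) (hn : 2 ≤ n) (α β : ℕ → ℝ) (i j : Fin n) :
    springMatrixPoly n α β i j =
      (if (i : ℕ) = (j : ℕ) then Polynomial.X ^ 2 else 0)
        + Polynomial.C (springL n α β i j) := by
  have hi := i.2
  have hj := j.2
  unfold springMatrixPoly springL
  simp only [Matrix.of_apply]
  split_ifs <;> first | omega | simp

theorem springL_row (n : ℕ) (hn : 2 ≤ n) (α β : ℕ → ℝ) (i c : ℕ) (hi : i < n) (hi0 : i ≠ 0)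
    (hc : c < n) :
    springL n α β i c =
      (fun x => if x = n then 0 else if x = i then α (i + 1)
        else if x = i + 1 then -β (i + 1) else 0) c
      - (fun x => if x = n then 0 else if x = i then α (i + 1)
        else if x = i + 1 then -β (i + 1) else 0) (c + 1) := by
  unfold springL
  by_cases h : i = n - 1
  · have : n = i + 1 := by omega
    subst this
    dsimp only
    split_ifs <;> first | omega | simp
  · dsimp only
    split_ifs <;> first | omega | simp

theorem springL_col (n : ℕ) (hn : 2 ≤ n) (α β m κ : ℕ → ℝ) (i c : ℕ) (hi : i < n)
    (h1 : m 1 = κ 1)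
    (hα : ∀ j, 2 ≤ j → j ≤ n → m j * α j = κ (j - 1))
    (hβ : ∀ j, 2 ≤ j → j ≤ n - 1 → m j * β j = κ j) :
    m (i + 1) * springL n α β i c =
      (fun x => if x = 0 ∨ x = n then 0 else
        κ x * ((if x = c then 1 else 0) - (if x = c + 1 then 1 else 0))) i
      - (fun x => if x = 0 ∨ x = n then 0 else
        κ x * ((if x = c then 1 else 0) - (if x = c + 1 then 1 else 0))) (i + 1) := by
  unfold springL
  dsimp only
  by_cases h0 : i = 0
  · subst h0
    split_ifs <;> first | omega | (exfalso; simp only [false_or] at *; omega) | simp [h1]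
  · have ha := hα (i + 1) (by omega) (by omega)
    simp only [Nat.add_sub_cancel] at ha
    by_cases h : i = n - 1
    · have : n = i + 1 := by omega
      subst this
      split_ifs <;> first | omega | (exfalso; simp only [false_or] at *; omega) | (simp; done) | (simp [mul_add]; linarith)
    · have hb := hβ (i + 1) (by omega) (by omega)
      split_ifs <;> first | omega | (exfalso; simp only [false_or] at *; omega) | (simp; done) | (simp [mul_add]; linarith)

theorem spring_col_sum (n : ℕ) (hn : 2 ≤ n) (α β m κ : ℕ → ℝ) (c : ℕ)
    (h1 : m 1 = κ 1)
    (hα : ∀ j, 2 ≤ j → j ≤ n → m j * α j = κ (j - 1))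
    (hβ : ∀ j, 2 ≤ j → j ≤ n - 1 → m j * β j = κ j) :
    ∑ i : Fin n, m (i + 1) * springL n α β i c = 0 := by
  rw [Fin.sum_univ_eq_sum_range (fun i => m (i + 1) * springL n α β i c)]
  rw [Finset.sum_congr rfl (fun i hi => springL_col n hn α β m κ i c
    (Finset.mem_range.1 hi) h1 hα hβ)]
  rw [Finset.sum_range_sub']
  simp

/-- The reduced real matrix. -/
noncomputable def springR (N : ℕ) (α β m : ℕ → ℝ) : Matrix (Fin (N + 2)) (Fin (N + 2)) ℝ :=
  Matrix.of fun i j => if i = 0 then m (j + 1) else springL (N + 2) α β i j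

theorem springR_det (N : ℕ) (α β m : ℕ → ℝ) :
    (springR N α β m).det =
      (∑ j ∈ Finset.Icc 1 (N + 2), m j) * ∏ j ∈ Finset.Icc 2 (N + 2), α j := by
  let U : Matrix (Fin (N + 2)) (Fin (N + 2)) ℝ := Matrix.of fun i j => if j ≤ i then 1 else 0
  have hU : U.det = 1 := by
    rw [Matrix.det_of_isLowerTriangular U]
    · simp [U]
    · intro i j hij
      have : i < j := hij
      simp [U, this]
  have hent : ∀ i c : Fin (N + 2), i ≠ 0 → c ≤ i →
      (springR N α β m * U) i c = if c = i then α (i + 1) else 0 := by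
    intro i c hi hc
    have hi' : (i : ℕ) ≠ 0 := fun h => hi (Fin.ext h)
    have hc' : (c : ℕ) ≤ i := hc
    have hin := i.2
    have hcn := c.2
    rw [Matrix.mul_apply]
    have e : ∀ x : Fin (N + 2), springR N α β m i x * U x c =
        (fun x : ℕ => if (c : ℕ) ≤ x then springL (N + 2) α β i x else 0) x := by
      intro x
      simp only [springR, U, Matrix.of_apply, if_neg hi, Fin.le_def, mul_ite, mul_one, mul_zero]
    rw [Finset.sum_congr rfl (fun x _ => e x), Fin.sum_univ_eq_sum_range
      (fun x : ℕ => if (c : ℕ) ≤ x then springL (N + 2) α β i x else 0)]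
    have e2 : ∀ x ∈ Finset.range (N + 2),
        (if (c : ℕ) ≤ x then springL (N + 2) α β i x else 0) = if (c : ℕ) ≤ x then _ else 0 :=
      fun x hx => by
        rw [springL_row (N + 2) (by omega) α β i x hin hi' (Finset.mem_range.1 hx)]
    rw [Finset.sum_congr rfl e2, spring_tail_sum _ _ _ hcn.le]
    have : c = i ↔ (c : ℕ) = i := Fin.ext_iff
    simp only [this]
    split_ifs <;> first | omega | simp
  have h00 : (springR N α β m * U) 0 0 = ∑ j ∈ Finset.Icc 1 (N + 2), m j := by
    rw [spring_sum_Icc_one, ← Fin.sum_univ_eq_sum_range (fun i => m (i + 1)), Matrix.mul_apply]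
    apply Finset.sum_congr rfl
    intro x _
    simp [springR, U]
  have hdet : (springR N α β m).det = (springR N α β m * U).det := by
    rw [Matrix.det_mul, hU, mul_one]
  rw [hdet, Matrix.det_of_isUpperTriangular, Fin.prod_univ_succ, h00, spring_prod_Icc_two,
    ← Fin.prod_univ_eq_prod_range (fun i => α (i + 2))]
  · congr 1
    apply Finset.prod_congr rfl
    intro x _
    rw [hent _ _ (Fin.succ_ne_zero x) le_rfl]
    simp [add_assoc]
  · intro i j hij
    have hij' : j < i := hij
    rw [hent i j (Fin.ne_zero_of_lt hij') hij'.le, if_neg hij'.ne]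

theorem spring_key (N : ℕ) (α β m κ : ℕ → ℝ)
    (h1 : m 1 = κ 1)
    (hα : ∀ j, 2 ≤ j → j ≤ N + 2 → m j * α j = κ (j - 1))
    (hβ : ∀ j, 2 ≤ j → j ≤ N + 2 - 1 → m j * β j = κ j) :
    m 1 * (springMatrixPoly (N + 2) α β).det.coeff 2 = (springR N α β m).det := by
  set A := springMatrixPoly (N + 2) α β with hA
  have hsum := Matrix.det_updateRow_sum A 0 (fun i => Polynomial.C (m (i + 1)))
  have hrow : (∑ i : Fin (N + 2), Polynomial.C (m ((i : ℕ) + 1)) • A i) =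
      (Polynomial.X ^ 2 : Polynomial ℝ) • fun j : Fin (N + 2) => Polynomial.C (m (j + 1)) := by
    funext j
    simp only [Finset.sum_apply, Pi.smul_apply, smul_eq_mul]
    simp only [hA, springMatrixPoly_apply (N + 2) (by omega) α β, mul_add,
      Finset.sum_add_distrib, ← Polynomial.C_mul]
    rw [← map_sum, spring_col_sum (N + 2) (by omega) α β m κ j h1 hα hβ]
    rw [map_zero, add_zero, Finset.sum_eq_single j]
    · rw [if_pos rfl, mul_comm]
    · intro b _ hb
      rw [if_neg (fun h => hb (Fin.ext h)), mul_zero]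
    · intro h
      exact absurd (Finset.mem_univ j) h
  rw [hrow, Matrix.det_updateRow_smul] at hsum
  have hc := congrArg (fun p => Polynomial.coeff p 2) hsum
  simp only [smul_eq_mul, Polynomial.coeff_C_mul, Fin.val_zero, zero_add] at hc
  have hX : ∀ p : Polynomial ℝ, (p * Polynomial.X ^ 2).coeff 2 = p.coeff 0 := fun p =>
    Polynomial.coeff_mul_X_pow p 2 0
  rw [← hc, mul_comm, hX,
    Polynomial.coeff_zero_eq_eval_zero, ← Polynomial.coe_evalRingHom, RingHom.map_det]
  congr 1
  ext i j
  by_cases hi : i = 0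
  · subst hi
    simp [springR]
  · simp [springR, hi, hA, springMatrixPoly_apply, Matrix.updateRow_ne hi]
    split_ifs <;> simp

/-- when the constants come from a mass–spring system, i.e.
`α j = (m 1 / m j) * (k (j−1) / k 1)` for `2 ≤ j ≤ n` and
`β j = (m 1 / m j) * (k j / k 1)` for `2 ≤ j ≤ n − 1` with all masses and spring
constants positive, the coefficient `a₂` of `s²` in `det A(s)` equals
`((∏_{j=2}^n α j) / m 1) * Σ_{j=1}^n m j`. -/
theorem springMatrixPoly_det_coeff_two
    (n : ℕ) (hn : 2 ≤ n) (α β : ℕ → ℝ) (m k : ℕ → ℝ)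
    (hm : ∀ j, 1 ≤ j → j ≤ n → 0 < m j)
    (hk : ∀ j, 1 ≤ j → j ≤ n - 1 → 0 < k j)
    (hα : ∀ j, 2 ≤ j → j ≤ n → α j = (m 1 / m j) * (k (j - 1) / k 1))
    (hβ : ∀ j, 2 ≤ j → j ≤ n - 1 → β j = (m 1 / m j) * (k j / k 1)) :
    (springMatrixPoly n α β).det.coeff 2 =
      ((∏ j ∈ Finset.Icc 2 n, α j) / m 1) * ∑ j ∈ Finset.Icc 1 n, m j := by
  have hk1 : k 1 ≠ 0 := (hk 1 le_rfl (by omega)).ne'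
  have hm1 : m 1 ≠ 0 := (hm 1 le_rfl (by omega)).ne'
  obtain ⟨N, rfl⟩ : ∃ N, n = N + 2 := ⟨n - 2, by omega⟩
  have h := spring_key N α β m (fun j => m 1 * (k j / k 1)) (by field_simp)
    (fun j h2 hj => by
      have := (hm j (by omega) hj).ne'
      rw [hα j h2 hj]
      field_simp)
    (fun j h2 hj => by
      have := (hm j (by omega) (by omega)).ne'
      rw [hβ j h2 hj]
      field_simp)
  rw [springR_det] at h
  field_simp
  linarith
end

section
/- The next-order correction to the short-time expansion of the bottom mass: the derivative of y_n of order 2n+1 at τ = 0 vanishes, and its derivative of order 2n+2 at τ = 0 equals (∏_{j=2}^n α_j) · (1 + Σ_{j=2}^{n−1} (α_j + β_j) + α_n); equivalently, y_n(τ) = −(∏_{j=2}^n α_j) (τ^{2n}/(2n)!) (1 − a_{2n−2} τ²/((2n+1)(2n+2))) + o(τ^{2n+2}) as τ → 0, where a_{2n−2} = 1 + Σ_{j=2}^{n−1}(α_j+β_j) + α_n. -/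
/-- Differentiating a linear second-order equation `k` times. -/
lemma mass_spring_iter (f g h : ℝ → ℝ) (a b c : ℝ)
    (hf : ContDiff ℝ (⊤ : ℕ∞) f) (hg : ContDiff ℝ (⊤ : ℕ∞) g) (hh : ContDiff ℝ (⊤ : ℕ∞) h)
    (H : ∀ t, deriv (deriv f) t = a * (g t - f t) + b * (h t - f t) + c) (k : ℕ) :
    iteratedDeriv (k + 2) f 0 = a * (iteratedDeriv k g 0 - iteratedDeriv k f 0)
      + b * (iteratedDeriv k h 0 - iteratedDeriv k f 0) + (if k = 0 then c else 0) := by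
  have hle : ((k : ℕ) : WithTop ℕ∞) ≤ ((⊤ : ℕ∞) : WithTop ℕ∞) := by
    exact_mod_cast le_top
  have hf' : ContDiffAt ℝ k f 0 := (hf.of_le hle).contDiffAt
  have hg' : ContDiffAt ℝ k g 0 := (hg.of_le hle).contDiffAt
  have hh' : ContDiffAt ℝ k h 0 := (hh.of_le hle).contDiffAt
  have e : deriv (deriv f) = ((fun t => a * (g - f) t) + (fun t => b * (h - f) t)) + fun _ => c := by
    funext t
    rw [H t]
    simp
  have h1 : ContDiffAt ℝ k (fun t => a * (g - f) t) 0 := contDiffAt_const.mul (hg'.sub hf')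
  have h2 : ContDiffAt ℝ k (fun t => b * (h - f) t) 0 := contDiffAt_const.mul (hh'.sub hf')
  have h12 : ContDiffAt ℝ k ((fun t => a * (g - f) t) + (fun t => b * (h - f) t)) 0 := h1.add h2
  rw [iteratedDeriv_succ', iteratedDeriv_succ', e, iteratedDeriv_add h12 contDiffAt_const,
    iteratedDeriv_add h1 h2, iteratedDeriv_const_mul_field, iteratedDeriv_const_mul_field,
    iteratedDeriv_sub hg' hf', iteratedDeriv_sub hh' hf', iteratedDeriv_const]

/-- The algebraic recursion for the derivatives at zero. -/
lemma mass_spring_rec (n : ℕ) (a b : ℕ → ℝ) (D : ℕ → ℕ → ℝ)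
    (D0 : ∀ j, D 0 j = 0) (D1 : ∀ j, D 1 j = 0)
    (Dout : ∀ k j, ¬ (1 ≤ j ∧ j ≤ n) → D k j = 0)
    (ha : a 1 = 0) (hb : b 1 = 1)
    (R : ∀ k j, 1 ≤ j → j ≤ n → D (k + 2) j = a j * (D k (j - 1) - D k j)
      + b j * (D k (j + 1) - D k j) + (if k = 0 then (if j = 1 then -1 else 0) else 0)) :
    (∀ m j, D (2 * m + 1) j = 0) ∧
    (∀ m j, 1 ≤ j → m < j → D (2 * m) j = 0) ∧
    (∀ j, 1 ≤ j → j ≤ n → D (2 * j) j = - ∏ i ∈ Finset.Icc 2 j, a i) ∧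
    (∀ j, 1 ≤ j → j ≤ n → D (2 * j + 2) j =
      (∏ i ∈ Finset.Icc 2 j, a i) * (1 + ∑ i ∈ Finset.Icc 2 j, (a i + b i))) := by
  have odd : ∀ m j, D (2 * m + 1) j = 0 := by
    intro m
    induction m with
    | zero => exact D1
    | succ m ih =>
      intro j
      by_cases hj : 1 ≤ j ∧ j ≤ n
      · rw [show 2 * (m + 1) + 1 = (2 * m + 1) + 2 by ring, R _ j hj.1 hj.2]
        simp [ih]
      · exact Dout _ _ hj
  have van : ∀ m j, 1 ≤ j → m < j → D (2 * m) j = 0 := by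
    intro m
    induction m with
    | zero => intro j _ _; exact D0 j
    | succ m ih =>
      intro j h1 hm
      by_cases hj : j ≤ n
      · rw [show 2 * (m + 1) = 2 * m + 2 by ring, R _ j h1 hj, ih j h1 (by omega),
          ih (j + 1) (by omega) (by omega), ih (j - 1) (by omega) (by omega)]
        simp [show j ≠ 1 by omega]
      · exact Dout _ _ (by tauto)
  have lead : ∀ j, 1 ≤ j → j ≤ n → D (2 * j) j = - ∏ i ∈ Finset.Icc 2 j, a i := by
    intro j h1
    induction j, h1 using Nat.le_induction with
    | base =>
      intro hn
      rw [show 2 * 1 = 0 + 2 by rfl, R 0 1 le_rfl hn]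
      simp [D0]
    | succ j h1 ih =>
      intro hn
      rw [show 2 * (j + 1) = 2 * j + 2 by ring, R _ (j + 1) (by omega) hn,
        van j (j + 1) (by omega) (by omega), van j (j + 1 + 1) (by omega) (by omega),
        Nat.add_sub_cancel, ih (by omega), Finset.prod_Icc_succ_top (by omega)]
      simp [show j ≠ 0 by omega]
      ring
  refine ⟨odd, van, lead, ?_⟩
  intro j h1
  induction j, h1 using Nat.le_induction with
  | base =>
    intro hn
    rw [R _ 1 le_rfl hn, lead 1 le_rfl hn, van 1 2 (by omega) (by omega), ha, hb]
    simp
  | succ j h1 ih =>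
    intro hn
    rw [R _ (j + 1) (by omega) hn, lead (j + 1) (by omega) hn,
      van (j + 1) (j + 1 + 1) (by omega) (by omega),
      Nat.add_sub_cancel, show 2 * (j + 1) = 2 * j + 2 by ring, ih (by omega),
      Finset.prod_Icc_succ_top (by omega), Finset.sum_Icc_succ_top (by omega)]
    simp
    ring

/-- next-order correction to the short-time expansion of the bottom mass. -/
theorem bottom_mass_short_time_correction
    (n : ℕ) (hn : 2 ≤ n) (α β : ℕ → ℝ)
    (hα : ∀ j, 2 ≤ j → j ≤ n → 0 < α j)
    (hβ : ∀ j, 2 ≤ j → j ≤ n - 1 → 0 < β j)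
    (y : ℕ → ℝ → ℝ)
    (hsmooth : ∀ j, 1 ≤ j → j ≤ n → ContDiff ℝ (⊤ : ℕ∞) (y j))
    (heq1 : ∀ t : ℝ, deriv (deriv (y 1)) t = (y 2 t - y 1 t) - 1)
    (heqj : ∀ j, 2 ≤ j → j ≤ n - 1 → ∀ t : ℝ,
      deriv (deriv (y j)) t = α j * (y (j - 1) t - y j t) + β j * (y (j + 1) t - y j t))
    (heqn : ∀ t : ℝ, deriv (deriv (y n)) t = α n * (y (n - 1) t - y n t))
    (hy0 : ∀ j, 1 ≤ j → j ≤ n → y j 0 = 0)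
    (hy0' : ∀ j, 1 ≤ j → j ≤ n → deriv (y j) 0 = 0) :
    iteratedDeriv (2 * n + 1) (y n) 0 = 0 ∧
    iteratedDeriv (2 * n + 2) (y n) 0 =
      (∏ j ∈ Finset.Icc 2 n, α j) * (1 + (∑ j ∈ Finset.Icc 2 (n - 1), (α j + β j)) + α n) ∧
    (fun τ : ℝ => y n τ -
        (-(∏ j ∈ Finset.Icc 2 n, α j) * (τ ^ (2 * n) / (Nat.factorial (2 * n))) *
          (1 - (1 + (∑ j ∈ Finset.Icc 2 (n - 1), (α j + β j)) + α n) * τ ^ 2 /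
            ((2 * (n : ℝ) + 1) * (2 * (n : ℝ) + 2)))))
      =o[nhds (0 : ℝ)] fun τ : ℝ => τ ^ (2 * n + 2) := by
  classical
  let Y : ℕ → ℝ → ℝ := fun j => if 1 ≤ j ∧ j ≤ n then y j else fun _ => 0
  let a : ℕ → ℝ := fun j => if 2 ≤ j then α j else 0
  let b : ℕ → ℝ := fun j => if j = 1 then 1 else if j < n then β j else 0
  have Yin : ∀ j, 1 ≤ j → j ≤ n → Y j = y j := fun j h1 h2 => if_pos ⟨h1, h2⟩
  have Yout : ∀ j, ¬ (1 ≤ j ∧ j ≤ n) → Y j = fun _ => 0 := fun j h => if_neg h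
  have Ysm : ∀ j, ContDiff ℝ (⊤ : ℕ∞) (Y j) := by
    intro j
    by_cases h : 1 ≤ j ∧ j ≤ n
    · rw [Yin j h.1 h.2]; exact hsmooth j h.1 h.2
    · rw [Yout j h]; exact contDiff_const
  have Yeq : ∀ j, 1 ≤ j → j ≤ n → ∀ t, deriv (deriv (Y j)) t =
      a j * (Y (j - 1) t - Y j t) + b j * (Y (j + 1) t - Y j t) + (if j = 1 then -1 else 0) := by
    intro j h1 h2 t
    rw [Yin j h1 h2]
    rcases Nat.lt_or_ge j 2 with h | h
    · obtain rfl : j = 1 := by omega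
      rw [Yin (1 + 1) (by omega) (by omega), heq1]
      simp [a, b]
      ring
    · rw [Yin (j - 1) (by omega) (by omega)]
      rcases Nat.lt_or_ge j n with h' | h'
      · rw [Yin (j + 1) (by omega) (by omega), heqj j h (by omega)]
        simp [a, b, h, h', show j ≠ 1 by omega]
      · obtain rfl : j = n := by omega
        rw [heqn]
        simp [a, b, h, show j ≠ 1 by omega]
  obtain ⟨odd, van, lead, nxt⟩ := mass_spring_rec n a b (fun k j => iteratedDeriv k (Y j) 0)
    (by
      intro j
      by_cases h : 1 ≤ j ∧ j ≤ n
      · simp [Yin j h.1 h.2, hy0 j h.1 h.2]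
      · simp [Yout j h])
    (by
      intro j
      by_cases h : 1 ≤ j ∧ j ≤ n
      · simp [Yin j h.1 h.2, hy0' j h.1 h.2]
      · simp [Yout j h])
    (by
      intro k j h
      simp [Yout j h, iteratedDeriv_const])
    (by simp [a]) (by simp [b])
    (fun k j h1 h2 => mass_spring_iter _ _ _ _ _ _ (Ysm j) (Ysm (j - 1)) (Ysm (j + 1))
      (Yeq j h1 h2) k)
  have hP : ∏ i ∈ Finset.Icc 2 n, a i = ∏ i ∈ Finset.Icc 2 n, α i :=
    Finset.prod_congr rfl fun i hi => if_pos (Finset.mem_Icc.1 hi).1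
  have hS : ∑ i ∈ Finset.Icc 2 n, (a i + b i)
      = (∑ j ∈ Finset.Icc 2 (n - 1), (α j + β j)) + α n := by
    obtain ⟨m, rfl⟩ : ∃ m, n = m + 1 := ⟨n - 1, by omega⟩
    rw [Finset.sum_Icc_succ_top (by omega), Nat.add_sub_cancel]
    congr 1
    · refine Finset.sum_congr rfl fun i hi => ?_
      have := Finset.mem_Icc.1 hi
      simp [a, b, this.1, show i ≠ 1 by omega]
      omega
    · simp [a, b, hn, show m ≠ 0 by omega]
  have o1 := fun m => odd m n
  have v1 := fun m => van m n (by omega)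
  have l1 := lead n (by omega) le_rfl
  have n1 := nxt n (by omega) le_rfl
  rw [hP] at l1
  rw [hP, hS, ← add_assoc] at n1
  simp only [Yin n (by omega) le_rfl] at o1 v1 l1 n1
  refine ⟨o1 n, n1, ?_⟩
  have hle : ((2 * n + 2 : ℕ) : WithTop ℕ∞) ≤ ((⊤ : ℕ∞) : WithTop ℕ∞) :=
    WithTop.coe_le_coe.2 (le_top : ((2 * n + 2 : ℕ) : ℕ∞) ≤ ⊤)
  have T := taylor_isLittleO_univ (f := y n) (x₀ := 0) (n := 2 * n + 2)
    ((hsmooth n (by omega) le_rfl).of_le hle)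
  have z : ∀ τ : ℝ, ∑ k ∈ Finset.range (2 * n),
      ((k.factorial : ℝ)⁻¹ * τ ^ k) * iteratedDeriv k (y n) 0 = 0 := by
    intro τ
    refine Finset.sum_eq_zero fun k hk => ?_
    have hk' := Finset.mem_range.1 hk
    rcases Nat.even_or_odd' k with ⟨m, rfl | rfl⟩
    · rw [v1 m (by omega), mul_zero]
    · rw [o1 m, mul_zero]
  simp only [taylor_within_apply, iteratedDerivWithin_univ, sub_zero, smul_eq_mul,
    Finset.sum_range_succ, z, o1, l1, n1] at T
  refine T.congr_left fun τ => ?_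
  have f1 : ((2 * n).factorial : ℝ) ≠ 0 := by positivity
  have f2 : ((2 * n + 2).factorial : ℝ) =
      (2 * (n : ℝ) + 2) * ((2 * (n : ℝ) + 1) * ((2 * n).factorial : ℝ)) := by
    rw [Nat.factorial_succ, Nat.factorial_succ]
    push_cast
    ring
  have f3 : 2 * (n : ℝ) + 1 ≠ 0 := by positivity
  have f4 : 2 * (n : ℝ) + 2 ≠ 0 := by positivity
  rw [f2]
  generalize (1 + (∑ j ∈ Finset.Icc 2 (n - 1), (α j + β j)) + α n) = S
  generalize (∏ j ∈ Finset.Icc 2 n, α j) = P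
  field_simp
  ring
end
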